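/- Let n be a natural number, V a finite set, and h : Fin n → V a function. Then the number of indices i ∈ Fin n for which there exists an index j ≠ i with h(i) = h(j) is at most the number of ordered pairs (i,j), i ≠ j, that are consecutive collision pairs for h, i.e., at most 2·(n − |h(Fin n)|). -/

import Mathlib

open Set

/-- `(i, j)` is a consecutive collision pair for `h`: `i ≠ j`, `h i = h j`, and
no index strictly between `i` and `j` has the same hash value. -/
def ConsecPair {n : ℕ} {V : Type*} (h : Fin n → V) (i j : Fin n) : Prop :=
  i ≠ j ∧ h i = h j ∧ ∀ a : Fin n, min i j < a → a < max i j → h a ≠ h i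

/-!
An index that takes part in a collision has a nearest other occurrence of its value on one of its
two sides, and so it is the first entry of a consecutive pair. An increasing consecutive pair is
determined by its larger entry, which can be any index that is not the first occurrence of its
value. First occurrences correspond bijectively to values, and swapping the entries doubles
the count.
-/

section LinearOrder

variable {ι V : Type*} [LinearOrder ι] {h : ι → V} {i j k : ι}

/-- `IsNextOccurrence h i j` says that `j` is the first index after `i` at which `h` takes the
value `h i` again. These are the increasing consecutive collision pairs; unlike `ConsecPair`, the
notion is directed and makes sense over any linear order of indices. -/
def IsNextOccurrence (h : ι → V) (i j : ι) : Prop :=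
  i < j ∧ h i = h j ∧ ∀ a ∈ Ioo i j, h a ≠ h i

theorem IsNextOccurrence.left_unique (hik : IsNextOccurrence h i k)
    (hjk : IsNextOccurrence h j k) : i = j := by
  have hij : h i = h j := hik.2.1.trans hjk.2.1.symm
  rcases lt_trichotomy i j with hlt | heq | hgt
  · exact absurd hij.symm (hik.2.2 j ⟨hlt, hjk.1⟩)
  · exact heq
  · exact absurd hij (hjk.2.2 i ⟨hgt, hik.1⟩)

theorem exists_isNextOccurrence_right [WellFoundedLT ι] (hij : i < j) (heq : h i = h j) :
    ∃ k, IsNextOccurrence h i k := by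
  obtain ⟨k, ⟨hik, hk⟩, hmin⟩ :=
    wellFounded_lt.has_min {k | i < k ∧ h i = h k} ⟨j, hij, heq⟩
  exact ⟨k, hik, hk, fun a ha hai => hmin a ⟨ha.1, hai.symm⟩ ha.2⟩

theorem exists_isNextOccurrence_left [WellFoundedGT ι] (hij : i < j) (heq : h i = h j) :
    ∃ k, IsNextOccurrence h k j := by
  obtain ⟨k, ⟨hkj, hk⟩, hmax⟩ :=
    wellFounded_gt.has_min {k | k < j ∧ h k = h j} ⟨i, hij, heq⟩
  exact ⟨k, hkj, hk, fun a ha hak => hmax a ⟨ha.2, hak.trans hk⟩ ha.1⟩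

theorem bijOn_snd_isNextOccurrence [WellFoundedGT ι] (h : ι → V) :
    BijOn Prod.snd {p : ι × ι | IsNextOccurrence h p.1 p.2} {j | ∃ i < j, h i = h j} := by
  refine ⟨fun p hp => ⟨p.1, hp.1, hp.2.1⟩, ?_, ?_⟩
  · rintro ⟨i, k⟩ hik ⟨j, _⟩ hjk rfl
    exact Prod.ext (hik.left_unique hjk) rfl
  · rintro j ⟨i, hij, heq⟩
    obtain ⟨k, hk⟩ := exists_isNextOccurrence_left hij heq
    exact ⟨(k, j), hk, rfl⟩

theorem bijOn_firstOccurrences_range [WellFoundedLT ι] (h : ι → V) :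
    BijOn h {j | ∃ i < j, h i = h j}ᶜ (range h) := by
  refine ⟨fun j _ => mem_range_self j, fun i hi j hj heq => ?_, ?_⟩
  · by_contra hne
    rcases lt_or_gt_of_ne hne with hlt | hgt
    · exact hj ⟨i, hlt, heq⟩
    · exact hi ⟨j, hgt, heq.symm⟩
  · rintro _ ⟨i, rfl⟩
    obtain ⟨k, hk, hmin⟩ := wellFounded_lt.has_min {k | h k = h i} ⟨i, rfl⟩
    exact ⟨k, fun ⟨a, hak, ha⟩ => hmin a (ha.trans hk) hak, hk⟩

theorem ncard_isNextOccurrence [Finite ι] (h : ι → V) :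
    {p : ι × ι | IsNextOccurrence h p.1 p.2}.ncard = Nat.card ι - (range h).ncard := by
  rw [(bijOn_snd_isNextOccurrence h).ncard_eq, ← (bijOn_firstOccurrences_range h).ncard_eq,
    ← ncard_add_ncard_compl {j | ∃ i < j, h i = h j}, Nat.add_sub_cancel]

theorem ncard_isNextOccurrence_or_swap [Finite ι] (h : ι → V) :
    {p : ι × ι | IsNextOccurrence h p.1 p.2 ∨ IsNextOccurrence h p.2 p.1}.ncard =
      2 * (Nat.card ι - (range h).ncard) := by
  have hdisj : Disjoint {p : ι × ι | IsNextOccurrence h p.1 p.2}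
      {p | IsNextOccurrence h p.2 p.1} :=
    disjoint_left.2 fun _ hp hp' => lt_asymm hp.1 hp'.1
  have hswap : {p : ι × ι | IsNextOccurrence h p.2 p.1}.ncard =
      {p : ι × ι | IsNextOccurrence h p.1 p.2}.ncard :=
    ncard_preimage_of_injective_subset_range (f := Prod.swap)
      (s := {p : ι × ι | IsNextOccurrence h p.1 p.2}) Prod.swap_injective
      (by simp only [Prod.swap_surjective.range_eq, subset_univ])
  rw [ofPred_or, ncard_union_eq hdisj, hswap, ncard_isNextOccurrence, two_mul]

theorem ncard_collisions_le [Finite ι] (h : ι → V) :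
    {i | ∃ j, j ≠ i ∧ h i = h j}.ncard ≤
      {p : ι × ι | IsNextOccurrence h p.1 p.2 ∨ IsNextOccurrence h p.2 p.1}.ncard := by
  refine (ncard_le_ncard ?_).trans (ncard_image_le (f := Prod.fst))
  rintro i ⟨j, hne, heq⟩
  rcases lt_or_gt_of_ne hne with hji | hij
  · obtain ⟨k, hk⟩ := exists_isNextOccurrence_left hji heq.symm
    exact ⟨(i, k), Or.inr hk, rfl⟩
  · obtain ⟨k, hk⟩ := exists_isNextOccurrence_right hij heq
    exact ⟨(i, k), Or.inl hk, rfl⟩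

theorem stmt4_general [Finite ι] (h : ι → V) :
    {i | ∃ j, j ≠ i ∧ h i = h j}.ncard ≤
      {p : ι × ι | IsNextOccurrence h p.1 p.2 ∨ IsNextOccurrence h p.2 p.1}.ncard ∧
    {i | ∃ j, j ≠ i ∧ h i = h j}.ncard ≤ 2 * (Nat.card ι - (range h).ncard) :=
  ⟨ncard_collisions_le h, (ncard_collisions_le h).trans_eq (ncard_isNextOccurrence_or_swap h)⟩

end LinearOrder

section ConsecPair

variable {n : ℕ} {V : Type*} {h : Fin n → V} {i j : Fin n}

theorem ConsecPair.symm (hij : ConsecPair h i j) : ConsecPair h j i := by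
  obtain ⟨hne, heq, hgap⟩ := hij
  refine ⟨hne.symm, heq.symm, fun a hmin hmax => ?_⟩
  rw [← heq]
  exact hgap a (min_comm j i ▸ hmin) (max_comm j i ▸ hmax)

theorem consecPair_iff_of_lt (hij : i < j) : ConsecPair h i j ↔ IsNextOccurrence h i j := by
  simp [ConsecPair, IsNextOccurrence, hij, hij.ne, hij.le]

theorem consecPair_iff :
    ConsecPair h i j ↔ IsNextOccurrence h i j ∨ IsNextOccurrence h j i := by
  constructor
  · intro hij
    rcases lt_or_gt_of_ne hij.1 with hlt | hgt
    · exact Or.inl ((consecPair_iff_of_lt hlt).1 hij)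
    · exact Or.inr ((consecPair_iff_of_lt hgt).1 hij.symm)
  · rintro (hij | hji)
    · exact (consecPair_iff_of_lt hij.1).2 hij
    · exact ((consecPair_iff_of_lt hji.1).2 hji).symm

end ConsecPair

theorem stmt4 {n : ℕ} {V : Type*} [Fintype V] (h : Fin n → V) :
    Set.ncard {i : Fin n | ∃ j, j ≠ i ∧ h i = h j} ≤
      Set.ncard {p : Fin n × Fin n | ConsecPair h p.1 p.2} ∧
    Set.ncard {i : Fin n | ∃ j, j ≠ i ∧ h i = h j} ≤
      2 * (n - Set.ncard (Set.range h)) := by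
  simpa only [consecPair_iff, Nat.card_fin] using stmt4_general h
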